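/- Let n ≥ 3 and let λ be a partition of n. Then Σ_{π ∈ C_λ} occ₍[₁₋₂₋₃)₎(π) = |C_λ| · ( C(n−1,2)/6 + (5n−7)·X₁/24 + X₂/8 + 5·X₃/24 + X₄/(8n) ), where occ₍[₁₋₂₋₃)₎(π) = #{(j,k) : 1 < j < k ≤ n, π(1) < π(j) < π(k)} is the number of occurrences of the vincular pattern [1-2-3) in π (occurrences of the classical pattern 123 that begin at the first position). -/

import Mathlib

open Equiv Finset

/-- The conjugacy class of permutations of `Fin n` with cycle type `lam`
(cycle type includes fixed points as parts of size 1, via `Equiv.Perm.partition`). -/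
def conjClass (n : ℕ) (lam : n.Partition) : Finset (Equiv.Perm (Fin n)) :=
  Finset.univ.filter fun π => (Equiv.Perm.partition π).parts = lam.parts

lemma aux_cnt {n : ℕ} (π : Perm (Fin n)) (k : ℕ) (hk : k.Prime) :
    (univ.filter fun x => (π ^ k) x = x ∧ π x ≠ x).card = k * π.cycleType.count k := by
  classical
  have h1 : (univ.filter fun x => (π ^ k) x = x ∧ π x ≠ x) =
      (π.cycleFactorsFinset.filter fun c => c.support.card = k).biUnion (fun c => c.support) := by
    ext x
    simp only [mem_filter, mem_univ, true_and, mem_biUnion]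
    constructor
    · rintro ⟨h, hx⟩
      have hc := Perm.isCycle_cycleOf π hx
      refine ⟨π.cycleOf x, ⟨?_, ?_⟩, ?_⟩
      · rwa [Perm.cycleOf_mem_cycleFactorsFinset_iff, Perm.mem_support]
      · rw [← Perm.cycleOf_pow_apply_self] at h
        rw [← hc.pow_eq_one_iff' (by rwa [Perm.cycleOf_apply_self]),
          ← orderOf_dvd_iff_pow_eq_one, Nat.dvd_prime hk, hc.orderOf] at h
        have := hc.two_le_card_support
        omega
      · rw [Perm.mem_support_cycleOf_iff' hx]
    · rintro ⟨c, ⟨hc, hcard⟩, hx⟩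
      have e := Perm.cycle_is_cycleOf hx hc
      have hcy := (Perm.mem_cycleFactorsFinset_iff.1 hc).1
      have hx' := Perm.mem_support.1 hx
      have hpx : π x ≠ x := by
        rwa [← (Perm.mem_cycleFactorsFinset_iff.1 hc).2 x hx]
      refine ⟨?_, hpx⟩
      rw [← Perm.cycleOf_pow_apply_self, ← e, ← hcard, ← hcy.orderOf, pow_orderOf_eq_one]; rfl
  rw [h1, card_biUnion]
  · rw [sum_congr rfl (g := fun _ => k)]
    · rw [sum_const, smul_eq_mul, mul_comm, Perm.cycleType_def, Multiset.count_map]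
      congr 2
      rw [Finset.card_def, filter_val]
      congr 1
      apply Multiset.filter_congr
      intros; exact eq_comm
    · intro c hc; simpa using (mem_filter.1 hc).2
  · intro c hc d hd hcd
    exact (Perm.cycleFactorsFinset_pairwise_disjoint π (mem_filter.1 hc).1 (mem_filter.1 hd).1 hcd).disjoint_support

lemma cnt_prime {n : ℕ} (π : Perm (Fin n)) (k : ℕ) (hk : k.Prime) :
    (univ.filter fun x => (π ^ k) x = x ∧ π x ≠ x).card = k * π.partition.parts.count k := by
  rw [aux_cnt π k hk, Perm.parts_partition, Multiset.count_add, Multiset.count_replicate]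
  simp [hk.one_lt.ne]

lemma cnt_one {n : ℕ} (π : Perm (Fin n)) :
    (univ.filter fun x => π x = x).card = π.partition.parts.count 1 := by
  rw [Perm.parts_partition, Multiset.count_add, Multiset.count_replicate,
    Multiset.count_eq_zero.2, zero_add]
  · have := card_filter_add_card_filter_not (s := (univ : Finset (Fin n))) (fun x => π x = x)
    have h2 : (univ.filter fun x => ¬ π x = x) = π.support := by ext; simp
    rw [h2] at this
    simp only [card_univ, Fintype.card_fin] at *
    simp; omega
  · intro h
    exact absurd (Perm.one_lt_of_mem_cycleType h) (by simp)

/- averaging -/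
lemma conj_avg (n : ℕ) (lam : n.Partition) (f : Perm (Fin n) → ℚ) (c : ℚ)
    (h : ∀ π ∈ conjClass n lam, ∑ σ : Perm (Fin n), f (σ * π * σ⁻¹) = (n.factorial : ℚ) * c) :
    ∑ π ∈ conjClass n lam, f π = (conjClass n lam).card * c := by
  have h1 : ∀ σ : Perm (Fin n), ∑ π ∈ conjClass n lam, f (σ * π * σ⁻¹) = ∑ π ∈ conjClass n lam, f π := by
    intro σ
    refine sum_bijective (fun π => σ * π * σ⁻¹) (MulAut.conj σ).bijective ?_ (fun _ _ => rfl)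
    intro π
    simp only [conjClass, mem_filter, mem_univ, true_and]
    have : π.partition = (σ * π * σ⁻¹).partition := by
      rw [← Perm.partition_eq_of_isConj]
      exact isConj_iff.2 ⟨σ, rfl⟩
    rw [this]
  have h2 : ∑ σ : Perm (Fin n), ∑ π ∈ conjClass n lam, f (σ * π * σ⁻¹) = n.factorial * ∑ π ∈ conjClass n lam, f π := by
    rw [sum_congr rfl (fun σ _ => h1 σ), sum_const, card_univ, Fintype.card_perm, Fintype.card_fin, nsmul_eq_mul]
  rw [sum_comm, sum_congr rfl h, sum_const, nsmul_eq_mul] at h2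
  have : (n.factorial : ℚ) ≠ 0 := by positivity
  apply mul_left_cancel₀ this
  rw [← h2]; ring

/- order statistics -/
def ORel {k m : ℕ} (L : List (Fin k × Fin k)) (f : Fin k → Fin m) : Prop := ∀ l ∈ L, f l.1 < f l.2

instance {k m : ℕ} (L : List (Fin k × Fin k)) (f : Fin k → Fin m) : Decidable (ORel L f) := by
  unfold ORel; infer_instance

lemma card_rel {k m : ℕ} (L : List (Fin k × Fin k)) (f : Fin k → Fin m) (hf : f.Injective) :
    (univ.filter fun τ : Perm (Fin k) => ORel L (f ∘ τ)).card =
    (univ.filter fun τ : Perm (Fin k) => ORel L (fun i => τ i)).card := by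
  have hs : StrictMono (f ∘ Tuple.sort f) :=
    (Tuple.monotone_sort f).strictMono_of_injective (hf.comp (Equiv.injective _))
  symm
  apply card_bij (fun τ _ => Tuple.sort f * τ)
  · intro τ hτ
    simp only [mem_filter, mem_univ, true_and] at *
    intro l hl
    exact hs (hτ l hl)
  · intro a _ b _ h; exact mul_left_cancel h
  · intro b hb
    refine ⟨(Tuple.sort f)⁻¹ * b, ?_, by simp⟩
    simp only [mem_filter, mem_univ, true_and] at *
    intro l hl
    apply hs.lt_iff_lt.1
    simpa using hb l hl

lemma card_zero {n : ℕ} (z i : Fin n) :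
    n * (univ.filter fun σ : Perm (Fin n) => σ i = z).card = n.factorial := by
  have h : ∀ a : Fin n, (univ.filter fun σ : Perm (Fin n) => σ i = a).card =
      (univ.filter fun σ : Perm (Fin n) => σ i = z).card := by
    intro a
    apply card_bij (fun σ _ => swap a z * σ)
    · intro σ hσ; simp at *; simp [hσ]
    · intro a _ b _ h; exact mul_left_cancel h
    · intro b hb
      refine ⟨swap a z * b, ?_, ?_⟩
      · simp at *; simp [hb]
      · simp [← mul_assoc]
  have h2 := card_eq_sum_card_fiberwise (s := (univ : Finset (Perm (Fin n)))) (f := fun σ => σ i) (t := univ) (by intro; simp)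
  rw [sum_congr rfl (fun a _ => h a)] at h2
  simpa [Fintype.card_perm] using h2.symm

lemma card_order {n k : ℕ} (z i : Fin n) (L : List (Fin k × Fin k)) (e : Fin k → Fin n)
    (he : e.Injective) (hi : ∀ j, e j ≠ i) :
    k.factorial * (n * (univ.filter fun σ : Perm (Fin n) => σ i = z ∧ ORel L (fun j => σ (e j))).card)
      = n.factorial * (univ.filter fun τ : Perm (Fin k) => ORel L (fun i => τ i)).card := by
  have key : ∀ τ : Perm (Fin k),
      (univ.filter fun σ : Perm (Fin n) => σ i = z ∧ ORel L (fun j => σ (e (τ j)))).card =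
      (univ.filter fun σ : Perm (Fin n) => σ i = z ∧ ORel L (fun j => σ (e j))).card := by
    intro τ
    let ρ : Perm (Fin n) := τ.viaFintypeEmbedding ⟨e, he⟩
    have h1 : ∀ j, ρ (e j) = e (τ j) := fun j => Perm.viaFintypeEmbedding_apply_image τ ⟨e, he⟩ j
    have h2 : ρ i = i := by
      apply Perm.viaFintypeEmbedding_apply_notMem_range
      rintro ⟨j, hj⟩; exact hi j hj
    apply card_bij (fun σ _ => σ * ρ)
    · intro σ hσ; simpa [h1, h2] using hσ
    · intro a _ b _ h; exact mul_right_cancel h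
    · intro b hb
      refine ⟨b * ρ⁻¹, ?_, by simp⟩
      have h2' : ρ.symm i = i := by rw [Equiv.symm_apply_eq, h2]
      have h1' : ∀ j, ρ.symm (e (τ j)) = e j := by intro j; rw [Equiv.symm_apply_eq, h1]
      simpa [h1', h2'] using hb
  have h3 : ∑ τ : Perm (Fin k), (univ.filter fun σ : Perm (Fin n) => σ i = z ∧ ORel L (fun j => σ (e (τ j)))).card
     = k.factorial * (univ.filter fun σ : Perm (Fin n) => σ i = z ∧ ORel L (fun j => σ (e j))).card := by
    rw [sum_congr rfl (fun τ _ => key τ)]; simp [Fintype.card_perm]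
  have h4 : ∑ τ : Perm (Fin k), (univ.filter fun σ : Perm (Fin n) => σ i = z ∧ ORel L (fun j => σ (e (τ j)))).card
     = (univ.filter fun σ : Perm (Fin n) => σ i = z).card * (univ.filter fun τ : Perm (Fin k) => ORel L (fun i => τ i)).card := by
    simp only [card_filter (fun σ : Perm (Fin n) => σ i = z ∧ _)]
    rw [sum_comm]
    simp only [ite_and]
    rw [card_filter (fun σ : Perm (Fin n) => σ i = z), sum_mul]
    apply sum_congr rfl
    intro σ _
    split_ifs
    · rw [← card_filter, one_mul]
      exact card_rel L (fun j => σ (e j)) (σ.injective.comp he)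
    · simp
  rw [h3] at h4
  rw [← card_zero z i]
  linear_combination n * h4


lemma card_ord {n : ℕ} (z i : Fin n) (k : ℕ) (L : List (Fin k × Fin k)) (e : Fin k → Fin n) (c m : ℕ)
    (hl : (i :: List.ofFn e).Nodup)
    (hc : (univ.filter fun τ : Perm (Fin k) => ORel L (fun i => τ i)).card = c)
    (E : Perm (Fin n) → Prop) [DecidablePred E]
    (hE : ∀ σ : Perm (Fin n), σ i = z → (E σ ↔ ORel L (fun j => σ (e j))))
    (hm : k.factorial * m = 24) :
    24 * ((n : ℚ) * (univ.filter fun σ : Perm (Fin n) => σ i = z ∧ E σ).card) = n.factorial * (c * m) := by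
  rw [List.nodup_cons, List.nodup_ofFn] at hl
  have h := card_order z i L e hl.2 (by intro j hj; exact hl.1 (by rw [List.mem_ofFn]; exact ⟨j, hj⟩))
  have h2 : (univ.filter fun σ : Perm (Fin n) => σ i = z ∧ E σ) =
    (univ.filter fun σ : Perm (Fin n) => σ i = z ∧ ORel L (fun j => σ (e j))) := by
    ext σ; simp only [mem_filter, mem_univ, true_and]
    constructor
    · rintro ⟨a, b⟩; exact ⟨a, (hE σ a).1 b⟩
    · rintro ⟨a, b⟩; exact ⟨a, (hE σ a).2 b⟩
  rw [h2]
  rw [hc] at h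
  have hm' : (k.factorial : ℚ) * m = 24 := by exact_mod_cast hm
  have h' : (k.factorial : ℚ) * (n * (univ.filter fun σ : Perm (Fin n) => σ i = z ∧ ORel L (fun j => σ (e j))).card) = n.factorial * c := by
    exact_mod_cast h
  rw [← hm']
  linear_combination m * h'

def dl {n : ℕ} (x y : Fin n) : ℚ := if x = y then 1 else 0

def gP {n : ℕ} (u v a b c : Fin n) : ℚ :=
  2 + dl a u - dl c u - dl a v + dl c v + dl a u * dl b v + dl b u * dl c v - dl b u * dl a v - dl c u * dl b v

def gQ {n : ℕ} (u v b c : Fin n) : ℚ :=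
  6 + 2 * dl b u + 2 * dl c v + 2 * dl b u * dl c v - 2 * dl b v - 2 * dl c u - 2 * dl c u * dl b v

lemma caseP {n : ℕ} (z i u v a b c : Fin n)
    (h : [i, u, v].Nodup) (h' : [i, a, b, c].Nodup) :
    24 * ((n : ℚ) * (univ.filter fun σ : Perm (Fin n) => σ i = z ∧ (σ u < σ v ∧ σ a < σ b ∧ σ b < σ c)).card)
      = n.factorial * gP u v a b c := by
  simp only [List.nodup_cons, List.mem_cons, List.not_mem_nil, not_or, or_false, not_false_eq_true, List.nodup_nil, and_true] at h h'
  obtain ⟨⟨iu, iv⟩, uv⟩ := h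
  obtain ⟨⟨ia, ib, ic⟩, ⟨ab, ac⟩, bc⟩ := h'
  by_cases au : a = u
  · subst au
    by_cases bv : b = v
    · subst bv
      rw [card_ord z i 3 [(0,1),(1,2)] ![a,b,c] 1 4 (by simp; tauto) (by decide +kernel) _ (by intro σ _; simp [ORel]) (by decide)]
      simp [gP, dl, *, Ne.symm uv, Ne.symm ac, Ne.symm bc]; norm_num
    by_cases cv : c = v
    · subst cv
      rw [card_ord z i 3 [(0,2),(2,1)] ![a,c,b] 1 4 (by simp; grind) (by decide +kernel) _ (by intro σ _; simp [ORel]; intros; order) (by decide)]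
      simp [gP, dl, *, Ne.symm uv, Ne.symm ac, Ne.symm ab, Ne.symm bc]; norm_num
    rw [card_ord z i 4 [(0,1),(0,2),(2,3)] ![a,v,b,c] 3 1 (by simp; grind) (by decide +kernel) _ (by intro σ _; simp [ORel]) (by decide)]
    simp [gP, dl, *, Ne.symm ac, Ne.symm ab]; norm_num
  by_cases bu : b = u
  · subst bu
    by_cases av : a = v
    · subst av
      rw [card_ord z i 2 [(0,1),(1,0)] ![b,a] 0 12 (by simp; grind) (by decide +kernel) _ (by intro σ _; simp [ORel]; intros; order) (by decide)]
      simp [gP, dl, *, Ne.symm ac, Ne.symm ab, Ne.symm bc]; try norm_num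
    by_cases cv : c = v
    · subst cv
      rw [card_ord z i 3 [(0,1),(2,0)] ![b,c,a] 1 4 (by simp; grind) (by decide +kernel) _ (by intro σ _; simp [ORel]; try tauto) (by decide)]
      simp [gP, dl, *, Ne.symm ac, Ne.symm ab, Ne.symm bc]; norm_num
    rw [card_ord z i 4 [(0,1),(2,0),(0,3)] ![b,v,a,c] 2 1 (by simp; grind) (by decide +kernel) _ (by intro σ _; simp [ORel]) (by decide)]
    simp [gP, dl, *, Ne.symm bc, Ne.symm ab]
  by_cases cu : c = u
  · subst cu
    by_cases av : a = v
    · subst av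
      rw [card_ord z i 3 [(0,1),(1,2),(2,0)] ![c,a,b] 0 4 (by simp; grind) (by decide +kernel) _ (by intro σ _; simp [ORel]) (by decide)]
      simp [gP, dl, *, Ne.symm ac, Ne.symm ab, Ne.symm bc]; try norm_num
    by_cases bv : b = v
    · subst bv
      rw [card_ord z i 2 [(0,1),(1,0)] ![c,b] 0 12 (by simp; grind) (by decide +kernel) _ (by intro σ _; simp [ORel]; intros; order) (by decide)]
      simp [gP, dl, *, Ne.symm ac, Ne.symm ab, Ne.symm bc]; try norm_num
    rw [card_ord z i 4 [(0,1),(2,3),(3,0)] ![c,v,a,b] 1 1 (by simp; grind) (by decide +kernel) _ (by intro σ _; simp [ORel]) (by decide)]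
    simp [gP, dl, *]; try norm_num
  by_cases av : a = v
  · subst av
    rw [card_ord z i 4 [(0,1),(1,2),(2,3)] ![u,a,b,c] 1 1 (by simp; grind) (by decide +kernel) _ (by intro σ _; simp [ORel]) (by decide)]
    simp [gP, dl, *, Ne.symm ac, Ne.symm ab]; try norm_num
  by_cases bv : b = v
  · subst bv
    rw [card_ord z i 4 [(0,1),(2,1),(1,3)] ![u,b,a,c] 2 1 (by simp; grind) (by decide +kernel) _ (by intro σ _; simp [ORel]) (by decide)]
    simp [gP, dl, *, Ne.symm bc]; try norm_num
  by_cases cv : c = v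
  · subst cv
    rw [card_ord z i 4 [(0,1),(2,3),(3,1)] ![u,c,a,b] 3 1 (by simp; grind) (by decide +kernel) _ (by intro σ _; simp [ORel]) (by decide)]
    simp [gP, dl, *]; try norm_num
  have h5 := card_order z i [((0:Fin 5),1),(2,3),(3,4)] ![u,v,a,b,c] (by rw [← List.nodup_ofFn]; simp; grind) (by intro j; fin_cases j <;> simp <;> grind)
  have h6 : (univ.filter fun τ : Perm (Fin 5) => ORel [((0:Fin 5),1),(2,3),(3,4)] (fun i => τ i)).card = 10 := by
    decide +kernel
  rw [h6] at h5
  simp [ORel, Nat.factorial_succ 4] at h5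
  simp [gP, dl, *]
  have h7 : ((Nat.factorial 5 : ℕ) : ℚ) * (n * (univ.filter fun σ : Perm (Fin n) => σ i = z ∧ σ u < σ v ∧ σ a < σ b ∧ σ b < σ c).card) = n.factorial * 10 := by
    exact_mod_cast h5
  norm_num [Nat.factorial] at h7
  linear_combination h7 / 5

lemma caseQ {n : ℕ} (z i u v b c : Fin n)
    (h : [i, u, v].Nodup) (h' : [i, b, c].Nodup) :
    24 * ((n : ℚ) * (univ.filter fun σ : Perm (Fin n) => σ i = z ∧ (σ u < σ v ∧ σ b < σ c)).card)
      = n.factorial * gQ u v b c := by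
  simp only [List.nodup_cons, List.mem_cons, List.not_mem_nil, not_or, or_false, not_false_eq_true, List.nodup_nil, and_true] at h h'
  obtain ⟨⟨iu, iv⟩, uv⟩ := h
  obtain ⟨⟨ib, ic⟩, bc⟩ := h'
  by_cases bu : b = u
  · subst bu
    by_cases cv : c = v
    · subst cv
      rw [card_ord z i 2 [(0,1)] ![b,c] 1 12 (by simp; grind) (by decide +kernel) _ (by intro σ _; simp [ORel]) (by decide)]
      simp [gQ, dl, *, Ne.symm bc]; norm_num
    rw [card_ord z i 3 [(0,1),(0,2)] ![b,v,c] 2 4 (by simp; grind) (by decide +kernel) _ (by intro σ _; simp [ORel]) (by decide)]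
    simp [gQ, dl, *, Ne.symm bc]; norm_num
  by_cases bv : b = v
  · subst bv
    by_cases cu : c = u
    · subst cu
      rw [card_ord z i 2 [(0,1),(1,0)] ![c,b] 0 12 (by simp; grind) (by decide +kernel) _ (by intro σ _; simp [ORel]) (by decide)]
      simp [gQ, dl, *, Ne.symm bc]; try norm_num
    rw [card_ord z i 3 [(0,1),(1,2)] ![u,b,c] 1 4 (by simp; grind) (by decide +kernel) _ (by intro σ _; simp [ORel]) (by decide)]
    simp [gQ, dl, *, Ne.symm bc]; norm_num
  by_cases cv : c = v
  · subst cv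
    rw [card_ord z i 3 [(0,1),(2,1)] ![u,c,b] 2 4 (by simp; grind) (by decide +kernel) _ (by intro σ _; simp [ORel]) (by decide)]
    simp [gQ, dl, *, Ne.symm uv]; norm_num
  by_cases cu : c = u
  · subst cu
    rw [card_ord z i 3 [(0,1),(2,0)] ![c,v,b] 1 4 (by simp; grind) (by decide +kernel) _ (by intro σ _; simp [ORel]) (by decide)]
    simp [gQ, dl, *]; try norm_num
  rw [card_ord z i 4 [(0,1),(2,3)] ![u,v,b,c] 6 1 (by simp; grind) (by decide +kernel) _ (by intro σ _; simp [ORel]) (by decide)]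
  simp [gQ, dl, *]

def gT {n : ℕ} (π : Perm (Fin n)) (i u v : Fin n) : ℚ :=
  if i = u ∨ i = v ∨ u = v then 0 else if π i = i then gQ u v (π u) (π v) else
    if π u = i ∨ π v = i then 0 else gP u v (π i) (π u) (π v)

lemma caseT {n : ℕ} (π : Perm (Fin n)) (z i u v : Fin n) (hz : ∀ x, z ≤ x) :
    24 * ((n : ℚ) * (univ.filter fun σ : Perm (Fin n) => σ i = z ∧ z < σ u ∧ σ u < σ v ∧
      σ (π i) < σ (π u) ∧ σ (π u) < σ (π v)).card) = n.factorial * gT π i u v := by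
  have em : ∀ E : Perm (Fin n) → Prop, ∀ [DecidablePred E], (∀ σ, ¬ E σ) →
      24 * ((n : ℚ) * (univ.filter fun σ : Perm (Fin n) => E σ).card) = n.factorial * 0 := by
    intro E _ h
    rw [filter_eq_empty_iff.2 (fun σ _ => h σ)]; simp
  unfold gT
  split_ifs with h1 h2 h3
  · apply em
    rintro σ ⟨h, h', h'', -⟩
    rcases h1 with rfl | rfl | rfl
    · exact h'.ne' h
    · rw [h] at h''; exact absurd (hz (σ u)) (not_le.2 h'')
    · exact lt_irrefl _ h''
  · push Not at h1
    have hu : π u ≠ i := fun h => h1.1 (π.injective (h2.trans h.symm))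
    have hv : π v ≠ i := fun h => h1.2.1 (π.injective (h2.trans h.symm))
    have huv : π u ≠ π v := fun h => h1.2.2 (π.injective h)
    rw [← caseQ z i u v (π u) (π v) (by simp; tauto) (by simp; tauto)]
    congr 4
    apply filter_congr
    intro σ _
    constructor
    · rintro ⟨a, b, c, d, e⟩; exact ⟨a, c, e⟩
    · rintro ⟨a, c, e⟩
      refine ⟨a, ?_, c, ?_, e⟩
      · exact lt_of_le_of_ne (hz _) (fun h => h1.1 (σ.injective (a.trans h)))
      · rw [h2, a]
        exact lt_of_le_of_ne (hz _) (fun h => hu (σ.injective (a.trans h)).symm)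
  · apply em
    rintro σ ⟨h, -, -, h4, h5⟩
    have h6 := h4.trans h5
    rcases h3 with h3 | h3
    · rw [h3, h] at h4; exact absurd (hz _) (not_le.2 h4)
    · rw [h3, h] at h6; exact absurd (hz _) (not_le.2 h6)
  · push Not at h1 h3
    have huv : π u ≠ π v := fun h => h1.2.2 (π.injective h)
    have hiu : π i ≠ π u := fun h => h1.1 (π.injective h)
    have hiv : π i ≠ π v := fun h => h1.2.1 (π.injective h)
    rw [← caseP z i u v (π i) (π u) (π v) (by simp; tauto) (by simp; grind)]
    congr 4
    apply filter_congr
    intro σ _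
    constructor
    · rintro ⟨a, b, c⟩; exact ⟨a, c⟩
    · rintro ⟨a, c⟩
      exact ⟨a, lt_of_le_of_ne (hz _) (fun h => h1.1 (σ.injective (a.trans h))), c⟩

lemma ite_aux (P Q : Prop) [Decidable P] [Decidable Q] (h : P ↔ Q) :
    (if P then 1 else 0 : ℕ) = if Q then 1 else 0 := by
  by_cases hP : P
  · rw [if_pos hP, if_pos (h.1 hP)]
  · rw [if_neg hP, if_neg (fun hq => hP (h.2 hq))]

lemma sum_conj_count {n : ℕ} (π : Perm (Fin n)) (z : Fin n) (hz : ∀ x, z ≤ x) :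
    24 * n * ∑ σ : Perm (Fin n), ((((Finset.univ : Finset (Fin n × Fin n)).filter fun x =>
          z < x.1 ∧ x.1 < x.2 ∧
          (σ * π * σ⁻¹) z < (σ * π * σ⁻¹) x.1 ∧ (σ * π * σ⁻¹) x.1 < (σ * π * σ⁻¹) x.2).card : ℚ))
      = n.factorial * ∑ i, ∑ u, ∑ v, gT π i u v := by
  simp only [mul_sum (s := (univ : Finset (Fin n))), ← caseT π z _ _ _ hz]
  simp only [← mul_sum (s := (univ : Finset (Fin n)))]
  rw [← mul_assoc]
  congr 1
  simp only [card_filter, Nat.cast_sum]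
  have : ∀ i, ∑ u, ∑ v, ∑ σ : Perm (Fin n), (((if σ i = z ∧ z < σ u ∧ σ u < σ v ∧
      σ (π i) < σ (π u) ∧ σ (π u) < σ (π v) then 1 else 0 : ℕ)) : ℚ) =
      ∑ σ : Perm (Fin n), ∑ u, ∑ v, (((if σ i = z ∧ z < σ u ∧ σ u < σ v ∧
      σ (π i) < σ (π u) ∧ σ (π u) < σ (π v) then 1 else 0 : ℕ)) : ℚ) := by
    intro i
    rw [sum_comm]
    rw [sum_congr rfl (fun u _ => sum_comm)]
    rw [sum_comm]
    refine sum_congr rfl fun σ _ => sum_comm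
  rw [sum_congr rfl (fun i _ => this i), sum_comm (s := (univ : Finset (Fin n)))]
  apply sum_congr rfl
  intro σ _
  rw [sum_eq_single (σ⁻¹ z), ← sum_product']
  · refine sum_bijective (fun x => (σ⁻¹ x.1, σ⁻¹ x.2)) ((σ⁻¹).prodCongr σ⁻¹).bijective (by simp) ?_
    rintro ⟨x, y⟩ _
    refine congrArg _ (ite_aux _ _ ?_)
    simp
  · intro i _ hi
    have : σ i ≠ z := by rintro rfl; simp at hi
    simp [this]
  · simp

lemma dl_symm {n : ℕ} (x y : Fin n) : dl x y = dl y x := by simp [dl, eq_comm]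

lemma sum_dl {n : ℕ} (a : Fin n) (f : Fin n → ℚ) : ∑ v, dl v a * f v = f a := by
  simp [dl]

lemma excl1 {n : ℕ} (a : Fin n) (f : Fin n → ℚ) :
    ∑ v, (if v = a then 0 else f v) = ∑ v, f v - f a := by
  rw [← sum_dl a f, ← sum_sub_distrib]
  refine sum_congr rfl fun v _ => ?_
  unfold dl; split_ifs <;> simp_all

lemma excl2 {n : ℕ} (a b : Fin n) (hab : a ≠ b) (f : Fin n → ℚ) :
    ∑ v, (if v = a ∨ v = b then 0 else f v) = ∑ v, f v - f a - f b := by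
  rw [← sum_dl a f, ← sum_dl b f, ← sum_sub_distrib, ← sum_sub_distrib]
  refine sum_congr rfl fun v _ => ?_
  unfold dl; split_ifs <;> simp_all

lemma excl3 {n : ℕ} (a b c : Fin n) (hab : a ≠ b) (hac : a ≠ c) (hbc : b ≠ c) (f : Fin n → ℚ) :
    ∑ v, (if v = a ∨ v = b ∨ v = c then 0 else f v) = ∑ v, f v - f a - f b - f c := by
  rw [← sum_dl a f, ← sum_dl b f, ← sum_dl c f, ← sum_sub_distrib, ← sum_sub_distrib, ← sum_sub_distrib]
  refine sum_congr rfl fun v _ => ?_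
  unfold dl; split_ifs <;> simp_all

lemma s1 {n : ℕ} (a : Fin n) : ∑ v, dl v a = 1 := by simp [dl]
lemma s2 {n : ℕ} (a : Fin n) : ∑ v, dl a v = 1 := by simp [dl]
lemma s3 {n : ℕ} (π : Perm (Fin n)) (a : Fin n) : ∑ v, dl (π v) a = 1 := by
  rw [Equiv.sum_comp π (fun v => dl v a), s1]
lemma s4 {n : ℕ} (π : Perm (Fin n)) (a b : Fin n) : ∑ v, dl (π v) a * dl b v = dl (π b) a := by
  simp [dl]

lemma sumQ {n : ℕ} (π : Perm (Fin n)) (i : Fin n) (hi : π i = i) :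
    ∑ u, ∑ v, gT π i u v = 6 * (n - 1) * (n - 2) + 4 * ((∑ x, dl (π x) x) - 1) * (n - 2)
      + 2 * ((∑ x, dl (π x) x) - 1) * ((∑ x, dl (π x) x) - 2) - 4 * (n - ∑ x, dl (π x) x)
      - 2 * ((∑ x, dl (π (π x)) x) - ∑ x, dl (π x) x) := by
  set p := ∑ x, dl (π x) x with hp
  set Q := ∑ x, dl (π (π x)) x with hQ
  have h1 : ∀ u, ∑ v, gT π i u v = if u = i then 0 else
      (6 * (n - 2) + 2 * (n - 2) * dl (π u) u + 2 * (p - 1 - dl (π u) u) + 2 * dl (π u) u * (p - 2)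
        - 4 * (1 - dl (π u) u) - 2 * (dl (π (π u)) u - dl (π u) u)) := by
    intro u
    split_ifs with hu
    · subst hu; simp [gT]
    · have h2 : ∀ v, gT π i u v = if v = i ∨ v = u then 0 else gQ u v (π u) (π v) := by
        intro v; unfold gT; simp only [hi, if_true]
        congr 1
        grind
      rw [sum_congr rfl (fun v _ => h2 v), excl2 _ _ (Ne.symm hu)]
      have hui : π u ≠ i := fun h => hu (π.injective (h.trans hi.symm))
      simp only [gQ, sum_add_distrib, sum_sub_distrib, mul_assoc, ← mul_sum, s1, s2, s3, s4, ← hp, hi]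
      by_cases hf : π u = u
      · simp [dl, hf, hu, hui, Ne.symm hu]; ring
      · simp [dl, hf, hu, hui, Ne.symm hu]; ring
  rw [sum_congr rfl (fun u _ => h1 u), excl1]
  simp only [sum_add_distrib, sum_sub_distrib, mul_assoc, ← mul_sum, ← sum_mul, ← hp, ← hQ, hi]
  simp [dl]
  ring

lemma sumP {n : ℕ} (π : Perm (Fin n)) (i : Fin n) (hi : π i ≠ i) (p Q : ℚ)
    (hp : p = ∑ x, dl (π x) x) (hQ : Q = ∑ x, dl (π (π x)) x) :
    ∑ u, ∑ v, gT π i u v =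
      (2 * n - 8 + p + dl (π (π i)) i) * (n - 2) + n * (1 - dl (π (π i)) i) + (p - 1 + dl (π (π i)) i) * p
        - Q + 2 * dl (π (π i)) i - dl (π (π (π i))) i := by
  obtain ⟨w, rfl⟩ := π.surjective i
  set i := π w with hidef
  have hwi : w ≠ i := fun h => hi (by rw [← h]; exact hidef.symm.trans h.symm)
  have hpe : ∀ x, π x = i ↔ x = w := fun x => π.injective.eq_iff
  have h1 : ∀ u, ∑ v, gT π i u v = if u = i ∨ u = w then 0 else
      (2 * n - 8 + p + dl (π (π i)) i + n * dl u (π i) + (p - 1 + dl (π (π i)) i) * dl (π u) u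
        - dl (π (π u)) u - dl u (π i) * dl (π (π (π i))) i) := by
    intro u
    split_ifs with hu
    · apply sum_eq_zero
      intro v _
      unfold gT
      rcases hu with rfl | rfl
      · simp
      · simp [hi, ← hidef]
    · push Not at hu
      have h2 : ∀ v, gT π i u v = if v = i ∨ v = w ∨ v = u then 0 else gP u v (π i) (π u) (π v) := by
        intro v; unfold gT; simp only [hi, if_false, hpe]
        grind
      rw [sum_congr rfl (fun v _ => h2 v), excl3 _ _ _ (Ne.symm hwi) (Ne.symm hu.1) (Ne.symm hu.2)]
      have hui : π u ≠ i := fun h => hu.2 ((hpe u).1 h)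
      simp only [gP, sum_add_distrib, sum_sub_distrib, mul_assoc, ← mul_sum, s1, s2, s3, s4, ← hp, ← hidef]
      have e1 : dl (π (π i)) i = dl (π i) w := by simp only [dl, hpe]
      have e2 : dl (π (π (π i))) i = dl (π (π i)) w := by simp only [dl, hpe]
      rw [e1, e2]
      by_cases hf : π u = u
      · have hiu : π i ≠ u := fun h => hu.1 (π.injective (hf.trans h.symm))
        simp [dl, hf, hu, hui, hi, hiu, Ne.symm hwi, Ne.symm hu.1, Ne.symm hu.2, Ne.symm hiu]; ring
      · by_cases hiu : π i = u
        · simp [dl, hf, hu, hui, hi, hiu, Ne.symm hwi, Ne.symm hu.1, Ne.symm hu.2]; ring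
        · simp [dl, hf, hu, hui, hi, hiu, Ne.symm hwi, Ne.symm hu.1, Ne.symm hu.2, Ne.symm hiu]; ring
  rw [sum_congr rfl (fun u _ => h1 u), excl2 _ _ (Ne.symm hwi)]
  simp only [sum_add_distrib, sum_sub_distrib, mul_assoc, ← mul_sum, ← sum_mul, ← hp, ← hQ, s1, ← hidef]
  have e1 : dl (π (π i)) i = dl (π i) w := by simp only [dl, hpe]
  have e2 : dl (π (π (π i))) i = dl (π (π i)) w := by simp only [dl, hpe]
  rw [e1, e2]
  by_cases hf : π i = w
  · simp [dl, hf, hi, hwi, Ne.symm hwi, ← hidef]; ring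
  · simp [dl, hf, hi, hwi, Ne.symm hwi, Ne.symm hf, Ne.symm hi, ← hidef]; ring

lemma sumT {n : ℕ} (π : Perm (Fin n)) (p Q R : ℚ)
    (hp : p = ∑ x, dl (π x) x) (hQ : Q = ∑ x, dl (π (π x)) x) (hR : R = ∑ x, dl (π (π (π x))) x) :
    ∑ i, ∑ u, ∑ v, gT π i u v =
      p * (6 * (n - 1) * (n - 2) + 4 * (p - 1) * (n - 2) + 2 * (p - 1) * (p - 2) - 4 * (n - p) - 2 * (Q - p))
      + (n - p) * ((2 * n - 8 + p) * (n - 2) + n + (p - 1) * p - Q) + (Q - p) * (n - 2 - n + p + 2) - (R - p) := by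
  have h : ∀ i, ∑ u, ∑ v, gT π i u v = dl (π i) i *
      (6 * (n - 1) * (n - 2) + 4 * (p - 1) * (n - 2) + 2 * (p - 1) * (p - 2) - 4 * (n - p) - 2 * (Q - p))
      + (1 - dl (π i) i) * ((2 * n - 8 + p) * (n - 2) + n + (p - 1) * p - Q)
      + (dl (π (π i)) i - dl (π i) i) * (n - 2 - n + p + 2) - (dl (π (π (π i))) i - dl (π i) i) := by
    intro i
    by_cases hi : π i = i
    · rw [sumQ π i hi, ← hp, ← hQ]; simp [dl, hi]
    · rw [sumP π i hi p Q hp hQ]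
      have : dl (π i) i = 0 := by simp [dl, hi]
      rw [this]; ring
  rw [sum_congr rfl (fun i _ => h i)]
  simp only [sum_add_distrib, sum_sub_distrib, ← sum_mul, ← hp, ← hQ, ← hR]
  simp

theorem stmt16 (n : ℕ) (hn : 3 ≤ n) (lam : n.Partition)
    (p q r X₁ X₂ X₃ X₄ : ℚ)
    (hp : p = (lam.parts.count 1 : ℚ)) (hq : q = (lam.parts.count 2 : ℚ))
    (hr : r = (lam.parts.count 3 : ℚ))
    (hX1 : X₁ = p - 1) (hX2 : X₂ = (p - 1) * (p - 2) / 2 + q - 1)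
    (hX3 : X₃ = (p - 1) * (p - 2) / 2 - q)
    (hX4 : X₄ = (p - 1) * (p - 2) * (p - 3) / 3 - p - r + 2) :
    (∑ π ∈ conjClass n lam,
      ((((Finset.univ : Finset (Fin n × Fin n)).filter fun x =>
          0 < (x.1 : ℕ) ∧ x.1 < x.2 ∧
          π ⟨0, by omega⟩ < π x.1 ∧ π x.1 < π x.2).card : ℚ)))
    = ((conjClass n lam).card : ℚ) *
      (((n - 1).choose 2 : ℚ) / 6 + (5 * (n : ℚ) - 7) * X₁ / 24 + X₂ / 8
        + 5 * X₃ / 24 + X₄ / (8 * (n : ℚ))) := by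
  apply conj_avg n lam (fun π => ((((Finset.univ : Finset (Fin n × Fin n)).filter fun x =>
          0 < (x.1 : ℕ) ∧ x.1 < x.2 ∧
          π ⟨0, by omega⟩ < π x.1 ∧ π x.1 < π x.2).card : ℚ)))
  intro π hπ
  have hpart : π.partition.parts = lam.parts := by simpa [conjClass] using hπ
  have c1 : p = ∑ x, dl (π x) x := by
    rw [hp, ← hpart, ← cnt_one, card_filter]; simp [dl]
  have cc : ∀ x, (if π x = x then (1 : ℚ) else 0) = dl (π x) x := fun x => rfl
  have c2 : p + 2 * q = ∑ x, dl (π (π x)) x := by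
    have h := cnt_prime π 2 Nat.prime_two
    rw [hpart, card_filter] at h
    have h' : (∑ x, if (π ^ 2) x = x ∧ π x ≠ x then (1 : ℚ) else 0) = 2 * q := by
      rw [hq]; exact_mod_cast h
    rw [← h', c1, ← sum_add_distrib]
    refine sum_congr rfl fun x _ => ?_
    by_cases hx : π x = x <;> simp [dl, pow_succ, hx]
  have c3 : p + 3 * r = ∑ x, dl (π (π (π x))) x := by
    have h := cnt_prime π 3 Nat.prime_three
    rw [hpart, card_filter] at h
    have h' : (∑ x, if (π ^ 3) x = x ∧ π x ≠ x then (1 : ℚ) else 0) = 3 * r := by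
      rw [hr]; exact_mod_cast h
    rw [← h', c1, ← sum_add_distrib]
    refine sum_congr rfl fun x _ => ?_
    by_cases hx : π x = x <;> simp [dl, pow_succ, hx]
  have key := sum_conj_count π ⟨0, by omega⟩ (fun x => Nat.zero_le _)
  rw [sumT π p _ _ c1 c2 c3] at key
  have hn0 : (n : ℚ) ≠ 0 := by positivity
  have hch : (((n - 1).choose 2 : ℕ) : ℚ) = ((n : ℚ) - 1) * (n - 2) / 2 := by
    rw [Nat.cast_choose_two, Nat.cast_sub (by omega)]; push_cast; ring
  apply mul_left_cancel₀ (show (24 * (n : ℚ)) ≠ 0 by positivity)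
  refine Eq.trans ?_ (key.trans ?_)
  · rfl
  · rw [hch, hX1, hX2, hX3, hX4]
    field_simp
    ring
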